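/- Let f ∈ GR_D(Q0,ε) for some ε ∈ (0, 1/2^{n−1}), let p > 1 satisfy p^p/(p−1)^{p−1} = 1/(2^{n−1}ε), and set γ = (p/(p−1))^p. Then γ > 1 and for every t ∈ (0,1], f^{**}(t/γ) ≤ γ^{1/p} f^{**}(t). -/

import Mathlib

open MeasureTheory Set Real

noncomputable section

/-- The unit cube `Q₀ = [0,1]ⁿ` in `ℝⁿ`. -/
def Q0 (n : ℕ) : Set (Fin n → ℝ) := Set.Icc 0 1

/-- The integral average `f_Q = (1/|Q|) ∫_Q f` of `f` over `Q`. -/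
def avgOn {n : ℕ} (f : (Fin n → ℝ) → ℝ) (Q : Set (Fin n → ℝ)) : ℝ :=
  (volume Q).toReal⁻¹ * ∫ x in Q, f x

/-- The mean oscillation `Ω(f,Q) = (1/|Q|) ∫_Q |f - f_Q|` of `f` over `Q`. -/
def oscOn {n : ℕ} (f : (Fin n → ℝ) → ℝ) (Q : Set (Fin n → ℝ)) : ℝ :=
  (volume Q).toReal⁻¹ * ∫ x in Q, |f x - avgOn f Q|

/-- `Q` is a dyadic subcube of `[0,1]ⁿ` of side length `2⁻ᵏ`,
i.e. `Q = ∏ᵢ [mᵢ 2⁻ᵏ, (mᵢ+1) 2⁻ᵏ]` with `0 ≤ mᵢ < 2ᵏ`. -/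
def IsDyadicSide (n k : ℕ) (Q : Set (Fin n → ℝ)) : Prop :=
  ∃ m : Fin n → ℕ, (∀ i, m i < 2 ^ k) ∧
    Q = Set.Icc (fun i => (m i : ℝ) / 2 ^ k) (fun i => ((m i : ℝ) + 1) / 2 ^ k)

/-- `Q` belongs to the family `𝒟` of dyadic subcubes of `[0,1]ⁿ`. -/
def IsDyadic (n : ℕ) (Q : Set (Fin n → ℝ)) : Prop := ∃ k, IsDyadicSide n k Q

/-- One-dimensional integral average `g_J` over a set `J ⊆ ℝ`. -/
def avgI (g : ℝ → ℝ) (J : Set ℝ) : ℝ := (volume J).toReal⁻¹ * ∫ u in J, g u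

/-- One-dimensional mean oscillation `Ω(g,J)` over a set `J ⊆ ℝ`. -/
def oscI (g : ℝ → ℝ) (J : Set ℝ) : ℝ :=
  (volume J).toReal⁻¹ * ∫ u in J, |g u - avgI g J|

/-- `g : (0,1] → ℝ` is the nonincreasing, left-continuous rearrangement of
`f : [0,1]ⁿ → ℝ`, i.e. it is nonincreasing, left continuous and equimeasurable with `f`. -/
def IsRearrangement {n : ℕ} (f : (Fin n → ℝ) → ℝ) (g : ℝ → ℝ) : Prop :=
  AntitoneOn g (Set.Ioc 0 1) ∧
  (∀ t ∈ Set.Ioc (0:ℝ) 1, ContinuousWithinAt g (Set.Iio t) t) ∧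
  ∀ lam : ℝ, volume {t ∈ Set.Ioc (0:ℝ) 1 | lam < g t} = volume {x ∈ Q0 n | lam < f x}

/-- The Hardy average `F(t) = (1/t) ∫_0^t g(u) du`. -/
def hardyAvg (g : ℝ → ℝ) (t : ℝ) : ℝ := t⁻¹ * ∫ u in Set.Ioc (0:ℝ) t, g u

/-- The Gurov–Reshetnyak modulus
`v(f;σ) = sup { Ω(f,Q)/f_Q : Q ∈ 𝒟, ℓ(Q) ≤ σ, f_Q > 0 }` (equal to `0` if no such `Q` exists,
by the convention `sSup ∅ = 0` in `ℝ`). -/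
def vGR {n : ℕ} (f : (Fin n → ℝ) → ℝ) (σ : ℝ) : ℝ :=
  sSup {r : ℝ | ∃ k Q, IsDyadicSide n k Q ∧ ((2:ℝ) ^ k)⁻¹ ≤ σ ∧
    0 < avgOn f Q ∧ r = oscOn f Q / avgOn f Q}

/-- `f` satisfies the dyadic Gurov–Reshetnyak condition `f ∈ GR_𝒟(Q₀,ε)`:
`f : Q₀ → [0,∞)` is integrable and `Ω(f,Q) ≤ ε f_Q` for every dyadic cube `Q`. -/
def GRcond {n : ℕ} (f : (Fin n → ℝ) → ℝ) (ε : ℝ) : Prop :=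
  IntegrableOn f (Q0 n) ∧ (∀ x ∈ Q0 n, 0 ≤ f x) ∧
    ∀ Q, IsDyadic n Q → oscOn f Q ≤ ε * avgOn f Q

/-!
Put `c = f**(t)` and `s = f*(t)`. Calderón–Zygmund stopping at height `c` covers `{f > c}`, up to a
null set, by disjoint dyadic cubes `Q` with `f_Q ≤ c` which have a dyadic child `R` with
`f_R > c`. On such a cube the Gurov–Reshetnyak condition gives `∫_Q (f - c)⁺ ≤ ε c |Q| / 2`,
while `(c - s) |Q| = 2ⁿ (c - s) |R| ≤ 2ⁿ ∫_Q (f - s)⁺`. Multiplying and summing over the cubes,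
`(c - s) ∫ (f - c)⁺ ≤ 2ⁿ⁻¹ ε c ∫ (f - s)⁺`. By equimeasurability the last integral is `t (c - s)`,
and `∫ (f - c)⁺ ≥ τ (f**(τ) - c)` for every `τ`. Cancelling `c - s` and taking `τ = t / γ` gives
`f**(t / γ) ≤ (1 + 2ⁿ⁻¹ ε γ) f**(t)`, and `p` is chosen so that `1 + 2ⁿ⁻¹ ε γ = γ^{1/p}`.
-/

open Filter Topology ProbabilityTheory BoxIntegral.unitPartition

section Measure

variable {α : Type*} [MeasurableSpace α] {μ : Measure α} {f : α → ℝ} {s t : Set α} {a b c : ℝ}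

lemma integral_posPart_sub_le_integral_abs_sub_average [IsFiniteMeasure μ] (hf : Integrable f μ)
    (hc : ⨍ x, f x ∂μ ≤ c) :
    ∫ x, (f x - c)⁺ ∂μ ≤ (∫ x, |f x - ⨍ y, f y ∂μ| ∂μ) / 2 := by
  have hf_sub : ∀ a, Integrable (fun x => f x - a) μ := fun a => hf.sub (integrable_const a)
  have hmean : ∫ x, (f x - ⨍ y, f y ∂μ) ∂μ = 0 := by
    rw [integral_sub hf (integrable_const _), integral_average, sub_self]
  calc ∫ x, (f x - c)⁺ ∂μ
      ≤ ∫ x, (f x - ⨍ y, f y ∂μ)⁺ ∂μ :=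
        integral_mono (hf_sub _).pos_part (hf_sub _).pos_part
          fun x => posPart_mono (sub_le_sub_left hc _)
    _ = (∫ x, |f x - ⨍ y, f y ∂μ| ∂μ) / 2 := by
        rw [integral_abs_eq_two_mul_integral_posPart_sub_integral (hf_sub _), hmean]
        ring

lemma sub_mul_measureReal_le_setIntegral_posPart_sub (hst : s ⊆ t) (ht : μ t ≠ ⊤)
    (hf : IntegrableOn f t μ) (hb : b ≤ ⨍ x in s, f x ∂μ) :
    (b - a) * μ.real s ≤ ∫ x in t, (f x - a)⁺ ∂μ := by
  have hs : μ s ≠ ⊤ := measure_ne_top_of_subset hst ht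
  have hf_sub : IntegrableOn (fun x => f x - a) t μ := hf.sub (integrableOn_const ht)
  have hf_posPart : IntegrableOn (fun x => (f x - a)⁺) t μ := hf_sub.pos_part
  calc (b - a) * μ.real s ≤ (⨍ x in s, f x ∂μ) * μ.real s - a * μ.real s := by
        rw [← sub_mul]; gcongr
    _ = ∫ x in s, (f x - a) ∂μ := by
        rw [integral_sub (hf.mono_set hst) (integrableOn_const hs), setIntegral_const,
          ← measure_smul_setAverage f hs]
        simp only [smul_eq_mul, mul_comm]
    _ ≤ ∫ x in s, (f x - a)⁺ ∂μ :=
        integral_mono (hf_sub.mono_set hst) (hf_posPart.mono_set hst) fun x => le_posPart _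
    _ ≤ ∫ x in t, (f x - a)⁺ ∂μ :=
        setIntegral_mono_set hf_posPart (ae_of_all _ fun x => posPart_nonneg _)
          hst.eventuallyLE

lemma sub_mul_setIntegral_posPart_sub_le {ε K : ℝ} (hε : 0 ≤ ε) (hK : 0 ≤ K) (ha : a ≤ b)
    (hb : 0 ≤ b) (hst : s ⊆ t) (ht : μ t ≠ ⊤) (hK_measure : μ.real t ≤ K * μ.real s)
    (hf : IntegrableOn f t μ) (htb : ⨍ x in t, f x ∂μ ≤ b) (hbs : b ≤ ⨍ x in s, f x ∂μ)
    (hosc : ⨍ x in t, |f x - ⨍ y in t, f y ∂μ| ∂μ ≤ ε * ⨍ x in t, f x ∂μ) :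
    (b - a) * ∫ x in t, (f x - b)⁺ ∂μ ≤ K * ε / 2 * b * ∫ x in t, (f x - a)⁺ ∂μ := by
  have : Fact (μ t < ⊤) := ⟨ht.lt_top⟩
  have hupper : ∫ x in t, (f x - b)⁺ ∂μ ≤ K * μ.real s * (ε * b) / 2 := by
    calc ∫ x in t, (f x - b)⁺ ∂μ
        ≤ (∫ x in t, |f x - ⨍ y in t, f y ∂μ| ∂μ) / 2 :=
          integral_posPart_sub_le_integral_abs_sub_average hf htb
      _ = μ.real t * (⨍ x in t, |f x - ⨍ y in t, f y ∂μ| ∂μ) / 2 := by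
          rw [← measure_smul_setAverage _ ht, smul_eq_mul]
      _ ≤ μ.real t * (ε * b) / 2 := by gcongr; exact hosc.trans (by gcongr)
      _ ≤ K * μ.real s * (ε * b) / 2 := by gcongr
  calc (b - a) * ∫ x in t, (f x - b)⁺ ∂μ
      ≤ (b - a) * (K * μ.real s * (ε * b) / 2) :=
        mul_le_mul_of_nonneg_left hupper (sub_nonneg.2 ha)
    _ = K * ε / 2 * b * ((b - a) * μ.real s) := by ring
    _ ≤ K * ε / 2 * b * ∫ x in t, (f x - a)⁺ ∂μ := by
        gcongr
        exact sub_mul_measureReal_le_setIntegral_posPart_sub hst ht hf hbs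

lemma setIntegral_sUnion_le_of_forall {g : α → ℝ} {S : Set (Set α)} (hS : S.Countable)
    (hm : ∀ Q ∈ S, MeasurableSet Q) (hd : S.PairwiseDisjoint id)
    (hf : IntegrableOn f (⋃₀ S) μ) (hg : IntegrableOn g (⋃₀ S) μ)
    (hle : ∀ Q ∈ S, ∫ x in Q, f x ∂μ ≤ ∫ x in Q, g x ∂μ) :
    ∫ x in ⋃₀ S, f x ∂μ ≤ ∫ x in ⋃₀ S, g x ∂μ := by
  have := hS.to_subtype
  have hdisj : Pairwise (Function.onFun Disjoint ((↑) : S → Set α)) := hd.subtype _ _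
  rw [sUnion_eq_iUnion] at hf hg ⊢
  exact hasSum_le (fun Q : S => hle Q Q.2) (hasSum_integral_iUnion (fun Q => hm Q Q.2) hdisj hf)
    (hasSum_integral_iUnion (fun Q => hm Q Q.2) hdisj hg)

lemma identDistrib_of_forall_measure_lt_eq {β : Type*} [MeasurableSpace β] {ν : Measure β}
    {g : β → ℝ} [IsFiniteMeasure μ] [IsFiniteMeasure ν] (huniv : μ univ = ν univ)
    (hf : AEMeasurable f μ) (hg : AEMeasurable g ν)
    (h : ∀ c, μ {x | c < f x} = ν {y | c < g y}) : IdentDistrib f g μ ν := by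
  refine ⟨hf, hg, Measure.ext_of_Iic _ _ fun c => ?_⟩
  have hIoi : μ.map f (Ioi c) = ν.map g (Ioi c) := by
    rw [Measure.map_apply_of_aemeasurable hf measurableSet_Ioi,
      Measure.map_apply_of_aemeasurable hg measurableSet_Ioi]
    exact h c
  rw [← compl_Ioi, measure_compl measurableSet_Ioi (measure_ne_top _ _),
    measure_compl measurableSet_Ioi (measure_ne_top _ _), hIoi,
    Measure.map_apply_of_aemeasurable hf .univ, Measure.map_apply_of_aemeasurable hg .univ,
    preimage_univ, preimage_univ, huniv]

end Measure

section DyadicCube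

variable {ι : Type*} {j k : ℕ} {x y z : ι → ℝ}

/-- The half-open dyadic cube `∏ᵢ (mᵢ 2⁻ᵏ, (mᵢ + 1) 2⁻ᵏ]`, `m ∈ ℤⁿ`, of generation `k` that contains
`x`. For fixed `k` these cubes partition the space, so that a cube is handled through any of its
points, and they differ from closed dyadic cubes by null sets only. -/
def dyadicCube (k : ℕ) (x : ι → ℝ) : Set (ι → ℝ) := box (2 ^ k) (index (2 ^ k) x)

lemma mem_dyadicCube_iff_index_eq : y ∈ dyadicCube k x ↔ index (2 ^ k) y = index (2 ^ k) x :=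
  mem_box_iff_index

lemma mem_dyadicCube_self (k : ℕ) (x : ι → ℝ) : x ∈ dyadicCube k x :=
  mem_dyadicCube_iff_index_eq.2 rfl

lemma dyadicCube_eq_of_mem (h : y ∈ dyadicCube k x) : dyadicCube k y = dyadicCube k x := by
  rw [dyadicCube, mem_dyadicCube_iff_index_eq.1 h, dyadicCube]

lemma dyadicCube_anti (hjk : j ≤ k) (x : ι → ℝ) : dyadicCube k x ⊆ dyadicCube j x := by
  obtain ⟨d, rfl⟩ := Nat.exists_eq_add_of_le hjk
  intro y hy
  simp only [mem_dyadicCube_iff_index_eq, funext_iff, index_apply, sub_left_inj] at hy ⊢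
  have ceil_le_iff : ∀ (a : ℝ) (m : ℤ),
      ⌈((2 ^ j : ℕ) : ℝ) * a⌉ ≤ m ↔ ⌈((2 ^ (j + d) : ℕ) : ℝ) * a⌉ ≤ 2 ^ d * m := by
    intro a m
    rw [Int.ceil_le, Int.ceil_le, ← mul_le_mul_iff_right₀ (show (0 : ℝ) < 2 ^ d by positivity)]
    push_cast
    ring_nf
  intro i
  exact eq_of_forall_ge_iff fun m => by rw [ceil_le_iff, ceil_le_iff, hy i]

lemma countable_range_dyadicCube [Finite ι] :
    (range fun q : ℕ × (ι → ℝ) => dyadicCube q.1 q.2).Countable := by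
  refine (countable_range fun q : ℕ × (ι → ℤ) => (box (2 ^ q.1) q.2 : Set (ι → ℝ))).mono ?_
  rintro _ ⟨q, rfl⟩
  exact ⟨(q.1, index (2 ^ q.1) q.2), rfl⟩

lemma measurableSet_dyadicCube [Finite ι] (k : ℕ) (x : ι → ℝ) : MeasurableSet (dyadicCube k x) :=
  BoxIntegral.Box.measurableSet_coe _

variable [Fintype ι]

lemma volume_dyadicCube_ne_top (k : ℕ) (x : ι → ℝ) : volume (dyadicCube k x) ≠ ⊤ := by
  simp [dyadicCube]

lemma volumeReal_dyadicCube_succ (k : ℕ) (x y : ι → ℝ) :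
    volume.real (dyadicCube k x) = 2 ^ Fintype.card ι * volume.real (dyadicCube (k + 1) y) := by
  simp [dyadicCube, Measure.real, pow_succ, mul_pow]

lemma Icc_box_index_eq_closedBall (k : ℕ) (x : ι → ℝ) :
    BoxIntegral.Box.Icc (box (2 ^ k) (index (2 ^ k) x)) =
      Metric.closedBall (fun i => ((index (2 ^ k) x i : ℝ) + 1 / 2) / 2 ^ k) ((2 ^ k)⁻¹ / 2) := by
  rw [BoxIntegral.Box.Icc_eq_pi, closedBall_pi _ (by positivity)]
  refine pi_congr rfl fun i _ => ?_
  rw [Real.closedBall_eq_Icc, box_lower, box_upper]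
  push_cast
  congr 1 <;> ring

lemma ae_tendsto_setAverage_dyadicCube {f : (ι → ℝ) → ℝ} (hf : LocallyIntegrable f) :
    ∀ᵐ x, Tendsto (fun k => ⨍ y in dyadicCube k x, f y) atTop (𝓝 (f x)) := by
  have hradius : Tendsto (fun k : ℕ => ((2 : ℝ) ^ k)⁻¹ / 2) atTop (𝓝[>] 0) := by
    refine tendsto_nhdsWithin_iff.2 ⟨?_, .of_forall fun k => mem_Ioi.2 (by positivity)⟩
    simpa using (tendsto_pow_atTop_nhds_zero_of_lt_one (r := (2 : ℝ)⁻¹) (by norm_num)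
      (by norm_num)).div_const 2
  filter_upwards [IsUnifLocDoublingMeasure.ae_tendsto_average volume hf 1] with x hx
  refine (hx (fun k i => ((index (2 ^ k) x i : ℝ) + 1 / 2) / 2 ^ k) _ hradius
    (.of_forall fun k => ?_)).congr fun k => ?_
  · rw [one_mul, ← Icc_box_index_eq_closedBall]
    exact BoxIntegral.Box.coe_subset_Icc (mem_dyadicCube_self k x)
  · rw [← Icc_box_index_eq_closedBall, dyadicCube,
      setAverage_congr (BoxIntegral.Box.coe_ae_eq_Icc _)]

end DyadicCube

section CalderonZygmund

variable {ι : Type*} [Fintype ι] {f : (ι → ℝ) → ℝ} {c : ℝ} {k : ℕ} {x y z : ι → ℝ}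

/-- Some dyadic child of `dyadicCube k x` has `f`-average larger than `c`. -/
def HasLargeChild (f : (ι → ℝ) → ℝ) (c : ℝ) (k : ℕ) (x : ι → ℝ) : Prop :=
  ∃ y ∈ dyadicCube k x, c < ⨍ u in dyadicCube (k + 1) y, f u

/-- The Calderón–Zygmund stopping cubes of `f` at height `c` inside `dyadicCube 0 z`: the maximal
dyadic cubes among those having a child on which the average of `f` exceeds `c`. Stopping one
generation before the average gets large keeps the average on the cube itself at most `c`. -/
def stoppingCubes (f : (ι → ℝ) → ℝ) (c : ℝ) (z : ι → ℝ) : Set (Set (ι → ℝ)) :=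
  {Q | ∃ k, ∃ x ∈ dyadicCube 0 z, Q = dyadicCube k x ∧ HasLargeChild f c k x ∧
    ∀ j < k, ¬ HasLargeChild f c j x}

lemma hasLargeChild_congr (h : y ∈ dyadicCube k x) :
    HasLargeChild f c k y ↔ HasLargeChild f c k x := by
  rw [HasLargeChild, dyadicCube_eq_of_mem h, HasLargeChild]

lemma countable_stoppingCubes : (stoppingCubes f c z).Countable :=
  countable_range_dyadicCube.mono <| by rintro _ ⟨k, x, -, rfl, -⟩; exact ⟨(k, x), rfl⟩

lemma measurableSet_of_mem_stoppingCubes {Q : Set (ι → ℝ)} (hQ : Q ∈ stoppingCubes f c z) :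
    MeasurableSet Q := by
  obtain ⟨k, x, -, rfl, -⟩ := hQ
  exact measurableSet_dyadicCube k x

lemma sUnion_stoppingCubes_subset : ⋃₀ stoppingCubes f c z ⊆ dyadicCube 0 z := by
  rintro y ⟨_, ⟨k, x, hx, rfl, -⟩, hy⟩
  rw [← dyadicCube_eq_of_mem hx]
  exact dyadicCube_anti k.zero_le x hy

lemma pairwiseDisjoint_stoppingCubes : (stoppingCubes f c z).PairwiseDisjoint id := by
  rintro _ ⟨k, x, -, rfl, hk, hk_min⟩ _ ⟨l, y, -, rfl, hl, hl_min⟩ hne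
  refine disjoint_left.2 fun u hux huy => hne ?_
  have hlk : l ≤ k := not_lt.1 fun hkl => hl_min k hkl <|
    (hasLargeChild_congr (dyadicCube_anti hkl.le y huy)).1 ((hasLargeChild_congr hux).2 hk)
  have hkl : k ≤ l := not_lt.1 fun hlk => hk_min l hlk <|
    (hasLargeChild_congr (dyadicCube_anti hlk.le x hux)).1 ((hasLargeChild_congr huy).2 hl)
  obtain rfl := le_antisymm hkl hlk
  rw [← dyadicCube_eq_of_mem hux, dyadicCube_eq_of_mem huy]

lemma setAverage_dyadicCube_le_of_forall_not_hasLargeChild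
    (hc : ⨍ u in dyadicCube 0 z, f u ≤ c) (hx : x ∈ dyadicCube 0 z)
    (h : ∀ j < k, ¬ HasLargeChild f c j x) : ⨍ u in dyadicCube k x, f u ≤ c := by
  cases k with
  | zero => rwa [dyadicCube_eq_of_mem hx]
  | succ j => exact not_lt.1 fun hlt => h j j.lt_succ_self ⟨x, mem_dyadicCube_self j x, hlt⟩

lemma ae_le_of_notMem_sUnion_stoppingCubes (hf : IntegrableOn f (dyadicCube 0 z))
    (hc : ⨍ u in dyadicCube 0 z, f u ≤ c) :
    ∀ᵐ x, x ∈ dyadicCube 0 z \ ⋃₀ stoppingCubes f c z → f x ≤ c := by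
  have hQ := measurableSet_dyadicCube 0 z
  have hloc : LocallyIntegrable ((dyadicCube 0 z).indicator f) :=
    ((integrable_indicator_iff hQ).2 hf).locallyIntegrable
  filter_upwards [ae_tendsto_setAverage_dyadicCube hloc] with x hlim ⟨hx, hx_notMem⟩
  rw [indicator_of_mem hx] at hlim
  refine le_of_tendsto' hlim fun k => ?_
  have hnot : ∀ j, ¬ HasLargeChild f c j x := fun j =>
    j.strong_induction_on fun j ih hj =>
      hx_notMem ⟨_, ⟨j, x, hx, rfl, hj, ih⟩, mem_dyadicCube_self j x⟩
  have hsub : dyadicCube k x ⊆ dyadicCube 0 z :=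
    dyadicCube_eq_of_mem hx ▸ dyadicCube_anti k.zero_le x
  rw [setAverage_congr_fun (measurableSet_dyadicCube k x)
    (ae_of_all _ fun y hy => indicator_of_mem (hsub hy) f)]
  exact setAverage_dyadicCube_le_of_forall_not_hasLargeChild hc hx fun j _ => hnot j

lemma sub_mul_setIntegral_stoppingCube_le {ε a : ℝ} {Q : Set (ι → ℝ)} (hε : 0 ≤ ε)
    (hac : a ≤ c) (hc0 : 0 ≤ c) (hf : IntegrableOn f (dyadicCube 0 z))
    (hc : ⨍ u in dyadicCube 0 z, f u ≤ c) (hQ : Q ∈ stoppingCubes f c z)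
    (hosc : ⨍ u in Q, |f u - ⨍ v in Q, f v| ≤ ε * ⨍ u in Q, f u) :
    (c - a) * ∫ u in Q, (f u - c)⁺ ≤
      2 ^ Fintype.card ι * ε / 2 * c * ∫ u in Q, (f u - a)⁺ := by
  have hQ_subset : Q ⊆ dyadicCube 0 z :=
    (subset_sUnion_of_mem hQ).trans sUnion_stoppingCubes_subset
  obtain ⟨k, x, hx, rfl, ⟨y, hy, hlarge⟩, hmin⟩ := hQ
  refine sub_mul_setIntegral_posPart_sub_le hε (by positivity) hac hc0
    (s := dyadicCube (k + 1) y) ?_ (volume_dyadicCube_ne_top k x)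
    (volumeReal_dyadicCube_succ k x y).le (hf.mono_set hQ_subset)
    (setAverage_dyadicCube_le_of_forall_not_hasLargeChild hc hx hmin) hlarge.le hosc
  exact dyadicCube_eq_of_mem hy ▸ dyadicCube_anti k.le_succ y

lemma sub_mul_setIntegral_posPart_sub_le_of_oscillation_le {ε a : ℝ} (hε : 0 ≤ ε) (hac : a ≤ c)
    (hc0 : 0 ≤ c) (hf : IntegrableOn f (dyadicCube 0 z)) (hc : ⨍ u in dyadicCube 0 z, f u ≤ c)
    (hosc : ∀ k, ∀ x ∈ dyadicCube 0 z, ⨍ u in dyadicCube k x, |f u - ⨍ v in dyadicCube k x, f v| ≤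
      ε * ⨍ u in dyadicCube k x, f u) :
    (c - a) * ∫ u in dyadicCube 0 z, (f u - c)⁺ ≤
      2 ^ Fintype.card ι * ε / 2 * c * ∫ u in dyadicCube 0 z, (f u - a)⁺ := by
  have hint : ∀ b, IntegrableOn (fun u => (f u - b)⁺) (dyadicCube 0 z) := fun b =>
    Integrable.pos_part (hf.sub (integrableOn_const (volume_dyadicCube_ne_top 0 z)))
  have hsub := sUnion_stoppingCubes_subset (f := f) (c := c) (z := z)
  have hstopped : ∫ u in dyadicCube 0 z, (f u - c)⁺ =
      ∫ u in ⋃₀ stoppingCubes f c z, (f u - c)⁺ := by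
    refine setIntegral_eq_of_subset_of_ae_sdiff_eq_zero
      (measurableSet_dyadicCube 0 z).nullMeasurableSet hsub ?_
    filter_upwards [ae_le_of_notMem_sUnion_stoppingCubes hf hc] with x hle hx
    exact posPart_eq_zero.2 (sub_nonpos.2 (hle hx))
  have hsum : ∫ u in ⋃₀ stoppingCubes f c z, (c - a) * (f u - c)⁺ ≤
      ∫ u in ⋃₀ stoppingCubes f c z, 2 ^ Fintype.card ι * ε / 2 * c * (f u - a)⁺ := by
    refine setIntegral_sUnion_le_of_forall countable_stoppingCubes
      (fun Q => measurableSet_of_mem_stoppingCubes) pairwiseDisjoint_stoppingCubes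
      (((hint c).mono_set hsub).const_mul _) (((hint a).mono_set hsub).const_mul _) fun Q hQ => ?_
    rw [integral_const_mul, integral_const_mul]
    refine sub_mul_setIntegral_stoppingCube_le hε hac hc0 hf hc hQ ?_
    obtain ⟨k, x, hx, rfl, -⟩ := hQ
    exact hosc k x hx
  rw [integral_const_mul, integral_const_mul] at hsum
  rw [hstopped]
  refine hsum.trans (mul_le_mul_of_nonneg_left ?_ (by positivity))
  exact setIntegral_mono_set (hint a) (ae_of_all _ fun u => posPart_nonneg _) hsub.eventuallyLE

end CalderonZygmund

section HardyAverage

variable {g : ℝ → ℝ} {a c r t : ℝ}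

lemma setIntegral_Ioc_sub_const (hr : 0 < r) (hg : IntegrableOn g (Ioc 0 r)) :
    ∫ u in Ioc 0 r, (g u - c) = r * (hardyAvg g r - c) := by
  rw [integral_sub hg (integrableOn_const measure_Ioc_lt_top.ne), setIntegral_const,
    Real.volume_real_Ioc_of_le hr.le, sub_zero, smul_eq_mul, mul_sub, hardyAvg,
    mul_inv_cancel_left₀ hr.ne']

lemma mul_hardyAvg_sub_le_setIntegral_posPart_sub (hg : IntegrableOn g (Ioc 0 a))
    (hr : r ∈ Ioc 0 a) : r * (hardyAvg g r - c) ≤ ∫ u in Ioc 0 a, (g u - c)⁺ := by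
  have hvol : volume.real (Ioc 0 r) = r := by rw [Real.volume_real_Ioc_of_le hr.1.le, sub_zero]
  have havg : hardyAvg g r = ⨍ u in Ioc 0 r, g u := by
    rw [setAverage_eq, hvol, smul_eq_mul, hardyAvg]
  calc r * (hardyAvg g r - c) = (hardyAvg g r - c) * volume.real (Ioc 0 r) := by
        rw [hvol, mul_comm]
    _ ≤ ∫ u in Ioc 0 a, (g u - c)⁺ :=
        sub_mul_measureReal_le_setIntegral_posPart_sub (Ioc_subset_Ioc_right hr.2)
          measure_Ioc_lt_top.ne hg havg.le

lemma setIntegral_posPart_sub_self (hg_anti : AntitoneOn g (Ioc 0 a))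
    (hg : IntegrableOn g (Ioc 0 a)) (ht : t ∈ Ioc 0 a) :
    ∫ u in Ioc 0 a, (g u - g t)⁺ = t * (hardyAvg g t - g t) := by
  have hsub : Ioc 0 t ⊆ Ioc 0 a := Ioc_subset_Ioc_right ht.2
  rw [← setIntegral_Ioc_sub_const ht.1 (hg.mono_set hsub)]
  calc ∫ u in Ioc 0 a, (g u - g t)⁺ = ∫ u in Ioc 0 t, (g u - g t)⁺ :=
        setIntegral_eq_of_subset_of_forall_sdiff_eq_zero measurableSet_Ioc hsub fun u hu =>
          posPart_eq_zero.2 <| sub_nonpos.2 <| hg_anti ht hu.1 <|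
            not_lt.1 fun hut => hu.2 ⟨hu.1.1, hut.le⟩
    _ = ∫ u in Ioc 0 t, (g u - g t) :=
        setIntegral_congr_fun measurableSet_Ioc fun u hu =>
          posPart_of_nonneg (sub_nonneg.2 (hg_anti (hsub hu) ht hu.2))

lemma le_hardyAvg (hg_anti : AntitoneOn g (Ioc 0 a)) (hg : IntegrableOn g (Ioc 0 a))
    (ht : t ∈ Ioc 0 a) : g t ≤ hardyAvg g t := by
  have hnonneg : 0 ≤ t * (hardyAvg g t - g t) :=
    setIntegral_posPart_sub_self hg_anti hg ht ▸ integral_nonneg fun u => posPart_nonneg _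
  exact sub_nonneg.1 (nonneg_of_mul_nonneg_right hnonneg ht.1)

lemma hardyAvg_le_hardyAvg (hg_anti : AntitoneOn g (Ioc 0 a)) (hg : IntegrableOn g (Ioc 0 a))
    (ht : t ∈ Ioc 0 a) : hardyAvg g a ≤ hardyAvg g t := by
  have ha : 0 < a := ht.1.trans_le ht.2
  refine sub_le_sub_iff_right (g t) |>.1 (le_of_mul_le_mul_left ?_ ha)
  calc a * (hardyAvg g a - g t) ≤ t * (hardyAvg g t - g t) :=
        setIntegral_posPart_sub_self hg_anti hg ht ▸
          mul_hardyAvg_sub_le_setIntegral_posPart_sub hg ⟨ha, le_rfl⟩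
    _ ≤ a * (hardyAvg g t - g t) :=
        mul_le_mul_of_nonneg_right ht.2 (sub_nonneg.2 (le_hardyAvg hg_anti hg ht))

end HardyAverage

section GurovReshetnyak

variable {n : ℕ} {f : (Fin n → ℝ) → ℝ} {g : ℝ → ℝ} {ε : ℝ}

lemma avgOn_eq_setAverage (f : (Fin n → ℝ) → ℝ) (Q : Set (Fin n → ℝ)) :
    avgOn f Q = ⨍ x in Q, f x := by
  rw [setAverage_eq, smul_eq_mul, avgOn, Measure.real]

lemma oscOn_eq_setAverage (f : (Fin n → ℝ) → ℝ) (Q : Set (Fin n → ℝ)) :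
    oscOn f Q = ⨍ x in Q, |f x - ⨍ y in Q, f y| := by
  rw [setAverage_eq, smul_eq_mul, oscOn, avgOn_eq_setAverage, Measure.real]

lemma volume_Q0 (n : ℕ) : volume (Q0 n) = 1 := by
  simp [Q0, Real.volume_Icc_pi]

lemma measurableSet_Q0 (n : ℕ) : MeasurableSet (Q0 n) :=
  measurableSet_Icc

lemma dyadicCube_zero_one_ae_eq_Q0 (n : ℕ) : dyadicCube 0 1 =ᵐ[volume] Q0 n := by
  refine (BoxIntegral.Box.coe_ae_eq_Icc _).trans (EventuallyEq.of_eq ?_)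
  rw [BoxIntegral.Box.Icc_def, Q0]
  congr 1 <;> ext i <;> simp [index_apply]

lemma isDyadic_Icc_box_index {k : ℕ} {x : Fin n → ℝ} (hx : x ∈ dyadicCube 0 1) :
    IsDyadic n (BoxIntegral.Box.Icc (box (2 ^ k) (index (2 ^ k) x))) := by
  have hindex : ∀ i, 0 ≤ index (2 ^ k) x i ∧ index (2 ^ k) x i < 2 ^ k := by
    intro i
    have hxi : 0 < x i ∧ x i ≤ 1 := by
      simpa [dyadicCube, mem_box_iff, index_apply] using mem_box_iff.1 hx i
    rw [index_apply, sub_nonneg, Int.one_le_ceil_iff, Int.sub_one_lt_iff, Int.ceil_le]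
    push_cast
    exact ⟨mul_pos (by positivity) hxi.1, mul_le_of_le_one_right (by positivity) hxi.2⟩
  lift index (2 ^ k) x to Fin n → ℕ using fun i => (hindex i).1 with m hm
  refine ⟨k, m, fun i => by exact_mod_cast (hindex i).2, ?_⟩
  rw [BoxIntegral.Box.Icc_def]
  congr 1 <;> ext i <;> simp

lemma GRcond.setAverage_dyadicCube_le (hf : GRcond f ε) {k : ℕ} {x : Fin n → ℝ}
    (hx : x ∈ dyadicCube 0 1) :
    ⨍ u in dyadicCube k x, |f u - ⨍ v in dyadicCube k x, f v| ≤
      ε * ⨍ u in dyadicCube k x, f u := by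
  have hclosed := hf.2.2 _ (isDyadic_Icc_box_index (k := k) hx)
  have hae : dyadicCube k x =ᵐ[volume] _ := BoxIntegral.Box.coe_ae_eq_Icc _
  simpa only [oscOn_eq_setAverage, avgOn_eq_setAverage, setAverage_congr hae] using hclosed

lemma GRcond.sub_mul_setIntegral_posPart_sub_le (hf : GRcond f ε) (hε : 0 ≤ ε) {a c : ℝ}
    (hac : a ≤ c) (hc : ∫ x in Q0 n, f x ≤ c) :
    (c - a) * ∫ x in Q0 n, (f x - c)⁺ ≤ 2 ^ n * ε / 2 * c * ∫ x in Q0 n, (f x - a)⁺ := by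
  have hQ := dyadicCube_zero_one_ae_eq_Q0 n
  have hc0 : 0 ≤ c := (setIntegral_nonneg (measurableSet_Q0 n) hf.2.1).trans hc
  have havg : ⨍ x in dyadicCube 0 1, f x ≤ c := by
    rw [setAverage_congr hQ, setAverage_eq, Measure.real, volume_Q0]
    simpa using hc
  simpa only [setIntegral_congr_set hQ, Fintype.card_fin] using
    sub_mul_setIntegral_posPart_sub_le_of_oscillation_le hε hac hc0 (hf.1.congr_set_ae hQ) havg
      fun k x hx => hf.setAverage_dyadicCube_le hx

lemma IsRearrangement.identDistrib (hg : IsRearrangement f g) (hf : IntegrableOn f (Q0 n)) :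
    IdentDistrib f g (volume.restrict (Q0 n)) (volume.restrict (Ioc 0 1)) := by
  have : Fact (volume (Q0 n) < ⊤) := ⟨by simp [volume_Q0]⟩
  refine identDistrib_of_forall_measure_lt_eq (by simp [volume_Q0]) hf.aemeasurable
    (aemeasurable_restrict_of_antitoneOn measurableSet_Ioc hg.1) fun c => ?_
  rw [Measure.restrict_apply' (measurableSet_Q0 n), Measure.restrict_apply' measurableSet_Ioc,
    inter_comm, inter_comm _ (Ioc _ _)]
  exact (hg.2.2 c).symm

lemma GRcond.identDistrib (hf : GRcond f ε) (hg : IsRearrangement (fun x => |f x|) g) :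
    IdentDistrib f g (volume.restrict (Q0 n)) (volume.restrict (Ioc 0 1)) := by
  have habs : f =ᵐ[volume.restrict (Q0 n)] fun x => |f x| :=
    ae_restrict_of_forall_mem (measurableSet_Q0 n) fun x hx => (abs_of_nonneg (hf.2.1 x hx)).symm
  exact (IdentDistrib.of_ae_eq hf.1.aemeasurable habs).trans (hg.identDistrib hf.1.abs)

lemma GRcond.setIntegral_posPart_sub_hardyAvg_le (hf : GRcond f ε) (hε : 0 ≤ ε)
    (hg : IsRearrangement (fun x => |f x|) g) {t : ℝ} (ht : t ∈ Ioc 0 1) :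
    ∫ u in Ioc 0 1, (g u - hardyAvg g t)⁺ ≤ 2 ^ n * ε / 2 * hardyAvg g t * t := by
  have hdist := hf.identDistrib hg
  have hg_int : IntegrableOn g (Ioc 0 1) := hdist.integrable_iff.1 hf.1
  have hposPart : ∀ c, ∫ x in Q0 n, (f x - c)⁺ = ∫ u in Ioc 0 1, (g u - c)⁺ := fun c =>
    (hdist.comp (u := fun y => (y - c)⁺) (by fun_prop)).integral_eq
  have hself : ∫ u in Ioc 0 1, (g u - g t)⁺ = t * (hardyAvg g t - g t) :=
    setIntegral_posPart_sub_self hg.1 hg_int ht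
  have hmean : ∫ x in Q0 n, f x ≤ hardyAvg g t := by
    simpa [hdist.integral_eq, hardyAvg] using hardyAvg_le_hardyAvg hg.1 hg_int ht
  rcases (le_hardyAvg hg.1 hg_int ht).eq_or_lt with heq | hlt
  · have hnonneg : 0 ≤ hardyAvg g t :=
      (setIntegral_nonneg (measurableSet_Q0 n) hf.2.1).trans hmean
    have hzero : ∫ u in Ioc 0 1, (g u - hardyAvg g t)⁺ = 0 := by
      rw [← heq, hself, ← heq, sub_self, mul_zero]
    rw [hzero]
    exact mul_nonneg (by positivity) ht.1.le
  · refine le_of_mul_le_mul_left ?_ (sub_pos.2 hlt)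
    calc (hardyAvg g t - g t) * ∫ u in Ioc 0 1, (g u - hardyAvg g t)⁺
        ≤ 2 ^ n * ε / 2 * hardyAvg g t * (t * (hardyAvg g t - g t)) := by
          rw [← hposPart, ← hself, ← hposPart]
          exact hf.sub_mul_setIntegral_posPart_sub_le hε hlt.le hmean
      _ = (hardyAvg g t - g t) * (2 ^ n * ε / 2 * hardyAvg g t * t) := by ring

theorem GRcond.hardyAvg_div_le (hf : GRcond f ε) (hε : 0 ≤ ε)
    (hg : IsRearrangement (fun x => |f x|) g) {γ t : ℝ} (hγ : 1 ≤ γ) (ht : t ∈ Ioc 0 1) :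
    hardyAvg g (t / γ) ≤ (1 + 2 ^ n * ε / 2 * γ) * hardyAvg g t := by
  have hg_int : IntegrableOn g (Ioc 0 1) := (hf.identDistrib hg).integrable_iff.1 hf.1
  have hτ : t / γ ∈ Ioc 0 1 :=
    ⟨div_pos ht.1 (by linarith), (div_le_self ht.1.le hγ).trans ht.2⟩
  have hdiff : hardyAvg g (t / γ) - hardyAvg g t ≤ 2 ^ n * ε / 2 * γ * hardyAvg g t := by
    refine le_of_mul_le_mul_left ?_ hτ.1
    calc t / γ * (hardyAvg g (t / γ) - hardyAvg g t)
        ≤ ∫ u in Ioc 0 1, (g u - hardyAvg g t)⁺ :=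
          mul_hardyAvg_sub_le_setIntegral_posPart_sub hg_int hτ
      _ ≤ 2 ^ n * ε / 2 * hardyAvg g t * t := hf.setIntegral_posPart_sub_hardyAvg_le hε hg ht
      _ = t / γ * (2 ^ n * ε / 2 * γ * hardyAvg g t) := by field_simp
  linarith

end GurovReshetnyak

lemma div_sub_one_rpow_eq {p : ℝ} (hp : 1 < p) :
    (p / (p - 1)) ^ p = p ^ p / (p - 1) ^ (p - 1) / (p - 1) := by
  have hp1 : 0 < p - 1 := sub_pos.2 hp
  rw [Real.div_rpow (by linarith) hp1.le, div_div, ← Real.rpow_add_one hp1.ne', sub_add_cancel]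

/-- If `f ∈ GR_𝒟(Q₀,ε)` with `ε ∈ (0, 1/2ⁿ⁻¹)`, `p > 1` satisfies
`pᵖ/(p−1)^{p−1} = 1/(2ⁿ⁻¹ε)` and `γ = (p/(p−1))ᵖ`, then `γ > 1` and
`f**(t/γ) ≤ γ^{1/p} f**(t)` for every `t ∈ (0,1]`. -/
theorem GR_iteration_step (n : ℕ) (hn : 1 ≤ n)
    (ε : ℝ) (hε : ε ∈ Set.Ioo 0 (1 / 2 ^ (n - 1)))
    (f : (Fin n → ℝ) → ℝ) (hf : GRcond f ε)
    (p : ℝ) (hp : 1 < p)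
    (hpeq : p ^ p / (p - 1) ^ (p - 1) = 1 / (2 ^ (n - 1) * ε))
    (fstar : ℝ → ℝ) (hfs : IsRearrangement (fun x => |f x|) fstar)
    (γ : ℝ) (hγ : γ = (p / (p - 1)) ^ p) :
    1 < γ ∧ ∀ t ∈ Set.Ioc (0:ℝ) 1,
      hardyAvg fstar (t / γ) ≤ γ ^ p⁻¹ * hardyAvg fstar t := by
  obtain ⟨hε_pos, -⟩ := hε
  have hp1 : 0 < p - 1 := sub_pos.2 hp
  have hγ_one : 1 < γ := by
    rw [hγ]
    exact Real.one_lt_rpow ((one_lt_div hp1).2 (sub_one_lt p)) (by linarith)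
  have hγ_eq : 2 ^ n * ε / 2 * γ = 1 / (p - 1) := by
    rw [hγ, div_sub_one_rpow_eq hp, hpeq, ← Nat.sub_add_cancel hn, pow_succ, Nat.add_sub_cancel]
    field_simp
  have hγ_root : γ ^ p⁻¹ = 1 + 2 ^ n * ε / 2 * γ := by
    rw [hγ_eq, hγ, Real.rpow_rpow_inv (by positivity) (by linarith)]
    field_simp
    ring
  refine ⟨hγ_one, fun t ht => ?_⟩
  rw [hγ_root]
  exact hf.hardyAvg_div_le hε_pos.le hfs hγ_one.le ht
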